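/- Moment-determinacy lemma (general case): let s ∈ (0,1) and F(x) = Σ_{n≥0} a_n x^n · e_{q²}(-x²) with |a_n| ≤ C s^n q^{n²/2} for some C > 0. If for some γ > 0, ∫_γ F(x) x^k d_q x = 0 for all k ∈ ℤ_{≥0}, then F = 0. -/

import Mathlib

open scoped BigOperators

noncomputable section

/-- finite q-Pochhammer symbol `(a;q)_k` -/
def qPoch (q a : ℝ) (k : ℕ) : ℝ := ∏ j ∈ Finset.range k, (1 - a * q ^ j)

/-- infinite q-Pochhammer symbol `(a;q)_∞` -/
def qPochInf (q a : ℝ) : ℝ := ∏' j : ℕ, (1 - a * q ^ j)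

/-- q-integral over the lattice `L(γ) = {± q^k γ}` -/
def qInt (q γ : ℝ) (f : ℝ → ℝ) : ℝ :=
  (1 - q) * ∑' k : ℤ, (q ^ k * γ) * (f (q ^ k * γ) + f (-(q ^ k * γ)))

/-- k-th q-moment -/
def qMoment (q γ : ℝ) (e : ℕ) (f : ℝ → ℝ) : ℝ :=
  q ^ (e * (e + 1) / 2) * qInt q γ (fun x => f x * x ^ e)

/-- k-th strict q-moment -/
def qNu (q γ : ℝ) (e : ℕ) (f : ℝ → ℝ) : ℝ :=
  q ^ (e * (e + 1) / 2) * qInt q γ (fun x => |f x * x ^ e|)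

/-- q-derivative -/
def qDeriv (q : ℝ) (f : ℝ → ℝ) : ℝ → ℝ := fun x => (f x - f (q * x)) / ((1 - q) * x)

/-- q-factorial `[e]_q!` -/
def qFact (q : ℝ) (e : ℕ) : ℝ := qPoch q q e / (1 - q) ^ e

/-- q-binomial coefficient -/
def qBinom (q : ℝ) (n k : ℕ) : ℝ := qPoch q q n / (qPoch q q k * qPoch q q (n - k))

/-- q-convolution -/
def qConv (q γ : ℝ) (f g : ℝ → ℝ) : ℝ → ℝ :=
  fun x => ∑' e : ℕ, (-1) ^ e * qMoment q γ e f / qFact q e * (qDeriv q)^[e] g x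

/-- the q-Gaussian `e_{q²}(-x²)` -/
def qGauss (q : ℝ) : ℝ → ℝ := fun x => 1 / qPochInf (q ^ 2) (-(x ^ 2))

/-- discrete q-Hermite II polynomials -/
def qHermiteII (q : ℝ) (k : ℕ) (x : ℝ) : ℝ :=
  qPoch q q k * ∑ l ∈ Finset.range (k / 2 + 1),
    (-1) ^ l * q ^ (2 * l ^ 2 + l) / q ^ (2 * l * k) * x ^ (k - 2 * l) /
      (qPoch (q ^ 2) (q ^ 2) l * qPoch q q (k - 2 * l))

/-- discrete delta function on the lattice, supported at `η γ q^p` -/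
def qdelta (q γ η : ℝ) (p : ℤ) : ℝ → ℝ := fun x => if x = η * γ * q ^ p then 1 else 0

open Filter Topology

/-!
Splitting `f` into its even and odd parts turns the vanishing of the moments into the linear
systems `∑ₙ dₙ q^{-nk} (b;q)_{n+k} = 0`, `k ≥ 0`, in base `q²`, where `dₙ` is a rescaled coefficient
of `f`. Since `(z;q)_∞` vanishes at every `q^{-m}`, Euler's expansion provides a combination of
these equations in which only `d₀` survives, with a positive factor. The growth condition gives
`|dₙ| ≤ D ρⁿ q^{n(n-1)/2}` (in the base of the system) with `ρ < 1`, which is what makes the double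
sum over `n` and `k` absolutely convergent. Once `d₀ = 0`, the remaining unknowns satisfy the system
with `b q` in place of `b`, and one concludes by induction.
-/

lemma qPoch_zero (q a : ℝ) : qPoch q a 0 = 1 := Finset.prod_range_zero _

lemma qPoch_succ (q a : ℝ) (n : ℕ) : qPoch q a (n + 1) = qPoch q a n * (1 - a * q ^ n) :=
  Finset.prod_range_succ _ _

lemma qPoch_add (q a : ℝ) (m n : ℕ) :
    qPoch q a (m + n) = qPoch q a m * qPoch q (a * q ^ m) n := by
  simp only [qPoch, Finset.prod_range_add, pow_add, mul_assoc]

lemma qPoch_succ' (q a : ℝ) (n : ℕ) : qPoch q a (n + 1) = (1 - a) * qPoch q (a * q) n := by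
  rw [add_comm, qPoch_add, qPoch_succ, qPoch_zero, one_mul, pow_zero, mul_one, pow_one]

lemma mul_pow_lt_one {q a : ℝ} (hq₀ : 0 ≤ q) (hq₁ : q ≤ 1) (ha : a < 1) (n : ℕ) :
    a * q ^ n < 1 := by
  rcases le_total a 0 with ha₀ | ha₀
  · exact (mul_nonpos_of_nonpos_of_nonneg ha₀ (pow_nonneg hq₀ n)).trans_lt one_pos
  · exact (mul_le_of_le_one_right ha₀ (pow_le_one₀ hq₀ hq₁)).trans_lt ha

lemma qPoch_pos {q a : ℝ} (hq₀ : 0 ≤ q) (hq₁ : q ≤ 1) (ha : a < 1) (n : ℕ) : 0 < qPoch q a n :=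
  Finset.prod_pos fun j _ => sub_pos.2 (mul_pow_lt_one hq₀ hq₁ ha j)

lemma qPoch_le_one {q a : ℝ} (hq₀ : 0 ≤ q) (hq₁ : q ≤ 1) (ha₀ : 0 ≤ a) (ha₁ : a < 1) (n : ℕ) :
    qPoch q a n ≤ 1 :=
  Finset.prod_le_one (fun j _ => (sub_pos.2 (mul_pow_lt_one hq₀ hq₁ ha₁ j)).le)
    fun j _ => sub_le_self 1 (mul_nonneg ha₀ (pow_nonneg hq₀ j))

lemma one_le_qPoch {q a : ℝ} (hq : 0 ≤ q) (ha : a ≤ 0) (n : ℕ) : 1 ≤ qPoch q a n :=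
  Finset.one_le_prod fun j _ => by
    linarith [mul_nonpos_of_nonpos_of_nonneg ha (pow_nonneg hq j)]

lemma neg_pow_mul_pow_choose_two_le_qPoch {q a : ℝ} (hq : 0 ≤ q) (ha : a ≤ 0) (n : ℕ) :
    (-a) ^ n * q ^ n.choose 2 ≤ qPoch q a n := by
  induction n with
  | zero => simp [qPoch_zero]
  | succ n ih =>
    have hfactor : 0 ≤ -a * q ^ n := mul_nonneg (neg_nonneg.2 ha) (pow_nonneg hq n)
    calc (-a) ^ (n + 1) * q ^ (n + 1).choose 2
        = (-a) ^ n * q ^ n.choose 2 * (-a * q ^ n) := by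
          rw [Nat.choose_succ_succ' n 1, Nat.choose_one_right]; ring
      _ ≤ qPoch q a n * (1 - a * q ^ n) :=
          mul_le_mul ih (by linarith) hfactor (zero_le_one.trans (one_le_qPoch hq ha n))
      _ = qPoch q a (n + 1) := (qPoch_succ q a n).symm

lemma summable_norm_mul_pow {q : ℝ} (hq : |q| < 1) (a : ℝ) :
    Summable fun n : ℕ => ‖-(a * q ^ n)‖ := by
  simpa only [norm_neg] using ((summable_geometric_of_abs_lt_one hq).mul_left a).norm

lemma tendsto_qPoch {q : ℝ} (hq : |q| < 1) (a : ℝ) :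
    Tendsto (qPoch q a) atTop (𝓝 (qPochInf q a)) := by
  have h : Multipliable fun n : ℕ => 1 - a * q ^ n := by
    simpa only [sub_eq_add_neg] using
      multipliable_one_add_of_summable (summable_norm_mul_pow hq a)
  exact h.hasProd.tendsto_prod_nat

lemma qPochInf_eq_qPoch_mul {q : ℝ} (hq : |q| < 1) (a : ℝ) (n : ℕ) :
    qPochInf q a = qPoch q a n * qPochInf q (a * q ^ n) := by
  refine tendsto_nhds_unique ((tendsto_qPoch hq a).comp (tendsto_add_atTop_nat n)) ?_
  refine ((tendsto_qPoch hq (a * q ^ n)).const_mul (qPoch q a n)).congr fun m => ?_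
  rw [Function.comp_apply, add_comm, qPoch_add]

lemma qPochInf_eq_one_sub_mul {q : ℝ} (hq : |q| < 1) (a : ℝ) :
    qPochInf q a = (1 - a) * qPochInf q (a * q) := by
  rw [qPochInf_eq_qPoch_mul hq a 1, qPoch_succ', qPoch_zero, mul_one, pow_one]

lemma qPochInf_inv_pow {q : ℝ} (hq₀ : q ≠ 0) (hq₁ : |q| < 1) (n : ℕ) :
    qPochInf q (q ^ n)⁻¹ = 0 := by
  rw [qPochInf_eq_qPoch_mul hq₁ _ (n + 1), qPoch_succ, inv_mul_cancel₀ (pow_ne_zero n hq₀),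
    sub_self, mul_zero, zero_mul]

lemma qPochInf_pos {q a : ℝ} (hq₀ : 0 ≤ q) (hq₁ : q < 1) (ha : a < 1) : 0 < qPochInf q a := by
  have hq : |q| < 1 := (abs_of_nonneg hq₀).trans_lt hq₁
  have hnonneg : 0 ≤ qPochInf q a :=
    ge_of_tendsto' (tendsto_qPoch hq a) fun n => (qPoch_pos hq₀ hq₁.le ha n).le
  have hne : ∏' n : ℕ, (1 + -(a * q ^ n)) ≠ 0 :=
    tprod_one_add_ne_zero_of_summable
      (fun n => by linarith [mul_pow_lt_one hq₀ hq₁.le ha n]) (summable_norm_mul_pow hq a)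
  simp only [← sub_eq_add_neg] at hne
  exact hnonneg.lt_of_ne' hne

lemma qPochInf_le_qPoch {q a : ℝ} (hq₀ : 0 ≤ q) (hq₁ : q < 1) (ha₀ : 0 ≤ a) (ha₁ : a < 1)
    (n : ℕ) : qPochInf q a ≤ qPoch q a n := by
  have hq : |q| < 1 := (abs_of_nonneg hq₀).trans_lt hq₁
  rw [qPochInf_eq_qPoch_mul hq a n]
  refine mul_le_of_le_one_right (qPoch_pos hq₀ hq₁.le ha₁ n).le
    (le_of_tendsto' (tendsto_qPoch hq _) fun m => ?_)
  exact qPoch_le_one hq₀ hq₁.le (mul_nonneg ha₀ (pow_nonneg hq₀ n))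
    (mul_pow_lt_one hq₀ hq₁.le ha₁ n) m

lemma qPoch_le_qPochInf {q a : ℝ} (hq₀ : 0 ≤ q) (hq₁ : q < 1) (ha : a ≤ 0) (n : ℕ) :
    qPoch q a n ≤ qPochInf q a := by
  have hq : |q| < 1 := (abs_of_nonneg hq₀).trans_lt hq₁
  rw [qPochInf_eq_qPoch_mul hq a n]
  refine le_mul_of_one_le_right (zero_le_one.trans (one_le_qPoch hq₀ ha n))
    (ge_of_tendsto' (tendsto_qPoch hq _) fun m => ?_)
  exact one_le_qPoch hq₀ (mul_nonpos_of_nonpos_of_nonneg ha (pow_nonneg hq₀ n)) m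

/-! ### Euler's expansion -/

lemma summable_pow_choose_two_mul_pow {q : ℝ} (hq : |q| < 1) (z : ℝ) :
    Summable fun n : ℕ => q ^ n.choose 2 * z ^ n := by
  have hratio : Tendsto (fun n : ℕ => ‖q ^ n * z‖) atTop (𝓝 0) := by
    simpa using ((tendsto_pow_atTop_nhds_zero_of_abs_lt_one hq).mul_const z).norm
  refine summable_of_ratio_norm_eventually_le (r := 1 / 2) (by norm_num) ?_
  filter_upwards [hratio.eventually_le_const one_half_pos] with n hn
  have hstep : q ^ (n + 1).choose 2 * z ^ (n + 1) = q ^ n * z * (q ^ n.choose 2 * z ^ n) := by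
    rw [Nat.choose_succ_succ' n 1, Nat.choose_one_right]; ring
  rw [hstep, norm_mul]
  exact mul_le_mul_of_nonneg_right hn (norm_nonneg _)

/-- The coefficients of Euler's expansion `(z;q)_∞ = ∑ₖ eulerCoeff q k * z ^ k`, proved in
`hasSum_eulerCoeff`. -/
def eulerCoeff (q : ℝ) (k : ℕ) : ℝ := (-1) ^ k * q ^ k.choose 2 / qPoch q q k

lemma eulerCoeff_zero (q : ℝ) : eulerCoeff q 0 = 1 := by simp [eulerCoeff, qPoch_zero]

lemma eulerCoeff_succ {q : ℝ} (hq₀ : 0 ≤ q) (hq₁ : q < 1) (k : ℕ) :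
    eulerCoeff q (k + 1) * (1 - q ^ (k + 1)) = -(eulerCoeff q k * q ^ k) := by
  have hfactor : 1 - q ^ (k + 1) ≠ 0 :=
    (sub_pos.2 (pow_lt_one₀ hq₀ hq₁ k.succ_ne_zero)).ne'
  have hpoch : qPoch q q k ≠ 0 := (qPoch_pos hq₀ hq₁.le hq₁ k).ne'
  rw [eulerCoeff, eulerCoeff, qPoch_succ, ← pow_succ', Nat.choose_succ_succ' k 1,
    Nat.choose_one_right]
  field_simp
  ring

lemma abs_eulerCoeff_le {q : ℝ} (hq₀ : 0 ≤ q) (hq₁ : q < 1) (k : ℕ) :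
    |eulerCoeff q k| ≤ (qPochInf q q)⁻¹ * q ^ k.choose 2 := by
  rw [eulerCoeff, abs_div, abs_mul, abs_pow, abs_neg, abs_one, one_pow, one_mul,
    abs_of_pos (qPoch_pos hq₀ hq₁.le hq₁ k), abs_of_nonneg (pow_nonneg hq₀ _), div_eq_inv_mul]
  exact mul_le_mul_of_nonneg_right (inv_anti₀ (qPochInf_pos hq₀ hq₁ hq₁)
    (qPochInf_le_qPoch hq₀ hq₁ hq₀ hq₁ k)) (pow_nonneg hq₀ _)

lemma summable_eulerCoeff_mul_pow {q : ℝ} (hq₀ : 0 ≤ q) (hq₁ : q < 1) (z : ℝ) :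
    Summable fun k : ℕ => eulerCoeff q k * z ^ k := by
  have hq : |q| < 1 := (abs_of_nonneg hq₀).trans_lt hq₁
  refine Summable.of_norm_bounded
    ((summable_pow_choose_two_mul_pow hq |z|).mul_left (qPochInf q q)⁻¹) fun k => ?_
  rw [norm_mul, norm_pow, Real.norm_eq_abs, Real.norm_eq_abs, ← mul_assoc]
  exact mul_le_mul_of_nonneg_right (abs_eulerCoeff_le hq₀ hq₁ k) (by positivity)

lemma tsum_eulerCoeff_eq_one_sub_mul {q : ℝ} (hq₀ : 0 ≤ q) (hq₁ : q < 1) (z : ℝ) :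
    ∑' k, eulerCoeff q k * z ^ k = (1 - z) * ∑' k, eulerCoeff q k * (z * q) ^ k := by
  have hz := summable_eulerCoeff_mul_pow hq₀ hq₁ z
  have hzq := summable_eulerCoeff_mul_pow hq₀ hq₁ (z * q)
  suffices h : ∑' k, (eulerCoeff q k * z ^ k - eulerCoeff q k * (z * q) ^ k)
      = -z * ∑' k, eulerCoeff q k * (z * q) ^ k by
    rw [hz.tsum_sub hzq] at h
    linarith
  rw [(hz.sub hzq).tsum_eq_zero_add, ← tsum_mul_left]
  simp only [pow_zero, sub_self, zero_add]
  refine tsum_congr fun k => ?_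
  calc eulerCoeff q (k + 1) * z ^ (k + 1) - eulerCoeff q (k + 1) * (z * q) ^ (k + 1)
      = eulerCoeff q (k + 1) * (1 - q ^ (k + 1)) * z ^ (k + 1) := by ring
    _ = -z * (eulerCoeff q k * (z * q) ^ k) := by rw [eulerCoeff_succ hq₀ hq₁]; ring

lemma tsum_eulerCoeff_eq_qPoch_mul {q : ℝ} (hq₀ : 0 ≤ q) (hq₁ : q < 1) (z : ℝ) (n : ℕ) :
    ∑' k, eulerCoeff q k * z ^ k = qPoch q z n * ∑' k, eulerCoeff q k * (z * q ^ n) ^ k := by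
  induction n with
  | zero => simp [qPoch_zero]
  | succ n ih =>
    rw [ih, tsum_eulerCoeff_eq_one_sub_mul hq₀ hq₁ (z * q ^ n), qPoch_succ, pow_succ]
    simp only [mul_assoc]

lemma tendsto_tsum_eulerCoeff_mul_pow {q : ℝ} (hq₀ : 0 ≤ q) (hq₁ : q < 1) (z : ℝ) :
    Tendsto (fun n : ℕ => ∑' k, eulerCoeff q k * (z * q ^ n) ^ k) atTop (𝓝 1) := by
  have hlim : ∑' k, eulerCoeff q k * (z * 0) ^ k = 1 := by
    rw [tsum_eq_single 0 fun k hk => by simp [hk], pow_zero, mul_one, eulerCoeff_zero]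
  rw [← hlim]
  refine tendsto_tsum_of_dominated_convergence (summable_eulerCoeff_mul_pow hq₀ hq₁ z).norm
    (fun k => (((tendsto_pow_atTop_nhds_zero_of_lt_one hq₀ hq₁).const_mul z).pow k).const_mul _)
    (Eventually.of_forall fun n k => ?_)
  have hshrink : ‖z * q ^ n‖ ≤ ‖z‖ := by
    rw [norm_mul, norm_pow, Real.norm_of_nonneg hq₀]
    exact mul_le_of_le_one_right (norm_nonneg z) (pow_le_one₀ hq₀ hq₁.le)
  rw [norm_mul, norm_mul, norm_pow, norm_pow]
  gcongr

theorem hasSum_eulerCoeff {q : ℝ} (hq₀ : 0 ≤ q) (hq₁ : q < 1) (z : ℝ) :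
    HasSum (fun k => eulerCoeff q k * z ^ k) (qPochInf q z) := by
  have hq : |q| < 1 := (abs_of_nonneg hq₀).trans_lt hq₁
  have hlim := (tendsto_qPoch hq z).mul (tendsto_tsum_eulerCoeff_mul_pow hq₀ hq₁ z)
  simp only [← tsum_eulerCoeff_eq_qPoch_mul hq₀ hq₁, mul_one] at hlim
  exact (summable_eulerCoeff_mul_pow hq₀ hq₁ z).hasSum_iff.2
    (tendsto_nhds_unique tendsto_const_nhds hlim)

-- Each factor of `(c q^k;q)_l` is affine in `q^k`, and multiplying the summand by `q^k` replaces
-- the zero `q^{-m}` of `(z;q)_∞` by `q^{-(m-1)}`, which is still a zero as long as `m ≥ 1`.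
lemma hasSum_eulerCoeff_mul_qPoch {q : ℝ} (hq₀ : 0 < q) (hq₁ : q < 1) (c : ℝ) {l m : ℕ}
    (hlm : l ≤ m) :
    HasSum (fun k => eulerCoeff q k * (q ^ m)⁻¹ ^ k * qPoch q (c * q ^ k) l) 0 := by
  induction l generalizing m with
  | zero =>
    have h := hasSum_eulerCoeff hq₀.le hq₁ (q ^ m)⁻¹
    rw [qPochInf_inv_pow hq₀.ne' ((abs_of_pos hq₀).trans_lt hq₁)] at h
    simpa only [qPoch_zero, mul_one] using h
  | succ l ih =>
    obtain ⟨m, rfl⟩ := Nat.exists_eq_add_of_le' (Nat.one_le_of_lt hlm)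
    have h := (ih (m := m + 1) (by omega)).sub ((ih (m := m) (by omega)).mul_left (c * q ^ l))
    rw [mul_zero, sub_zero] at h
    refine h.congr_fun fun k => ?_
    have hpow : (q ^ m)⁻¹ ^ k = (q ^ (m + 1))⁻¹ ^ k * q ^ k := by
      rw [← mul_pow, pow_succ, mul_inv, inv_mul_cancel_right₀ hq₀.ne']
    rw [qPoch_succ, hpow]
    ring

/-! ### The normalised moment system -/

/-- The matrix `q^{-nk} (b;q)_{n+k}`. With `q ^ 2` for `q` and `b = q ^ (2 * ε + 1)` it is, up to
rescaling its rows and columns, the Hankel matrix formed by the moments of the `q`-Gaussian of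
orders `2ε + 2(n + k)`. -/
def qHankel (q b : ℝ) (n k : ℕ) : ℝ := (q ^ (n * k))⁻¹ * qPoch q b (n + k)

/-- The coefficients of a combination of the rows `qHankel q b · k` which annihilates every column
but the first one. -/
def qHankelDual (q b : ℝ) (k : ℕ) : ℝ := eulerCoeff q k * q ^ k / qPoch q (b * q) k

lemma qHankel_succ (q b : ℝ) (n k : ℕ) :
    qHankel q b (n + 1) k = (q ^ k)⁻¹ * (1 - b) * qHankel q (b * q) n k := by
  rw [qHankel, qHankel, add_right_comm, qPoch_succ', add_one_mul, pow_add, mul_inv]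
  ring

lemma hasSum_qHankelDual_mul_qHankel_succ {q b : ℝ} (hq₀ : 0 < q) (hq₁ : q < 1) (hb : b < 1)
    (n : ℕ) : HasSum (fun k => qHankelDual q b k * qHankel q b (n + 1) k) 0 := by
  have hbq : b * q < 1 := by simpa only [pow_one] using mul_pow_lt_one hq₀.le hq₁.le hb 1
  have h := (hasSum_eulerCoeff_mul_qPoch hq₀ hq₁ (b * q) (le_refl n)).mul_left (1 - b)
  rw [mul_zero] at h
  refine h.congr_fun fun k => ?_
  have hpoch : qPoch q (b * q) k ≠ 0 := (qPoch_pos hq₀.le hq₁.le hbq k).ne'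
  have hqk : q ^ k ≠ 0 := pow_ne_zero k hq₀.ne'
  rw [qHankel_succ, qHankel, qHankelDual, add_comm n k, qPoch_add, inv_pow, ← pow_mul]
  field_simp

lemma hasSum_qHankelDual_mul_qHankel_zero {q b : ℝ} (hq₀ : 0 ≤ q) (hq₁ : q < 1) (hb₀ : 0 ≤ b)
    (hb₁ : b < 1) (k : ℕ) :
    HasSum (fun i => (1 - b) * (b ^ i * (eulerCoeff q k * (q ^ (i + 1)) ^ k)))
      (qHankelDual q b k * qHankel q b 0 k) := by
  have hratio : b * q ^ k < 1 := mul_pow_lt_one hq₀ hq₁.le hb₁ k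
  have hbq : b * q < 1 := by simpa only [pow_one] using mul_pow_lt_one hq₀ hq₁.le hb₁ 1
  have hpoch : qPoch q b k * (1 - b * q ^ k) = (1 - b) * qPoch q (b * q) k := by
    rw [← qPoch_succ, qPoch_succ']
  have hvalue : qHankelDual q b k * qHankel q b 0 k
      = (1 - b) * (eulerCoeff q k * q ^ k) * (1 - b * q ^ k)⁻¹ := by
    have hne : qPoch q (b * q) k ≠ 0 := (qPoch_pos hq₀ hq₁.le hbq k).ne'
    have hne' : 1 - b * q ^ k ≠ 0 := (sub_pos.2 hratio).ne'
    rw [qHankelDual, qHankel, zero_mul, pow_zero, inv_one, one_mul, zero_add,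
      div_mul_eq_mul_div, div_eq_iff hne, mul_right_comm _ _ (qPoch q (b * q) k),
      eq_mul_inv_iff_mul_eq₀ hne']
    linear_combination eulerCoeff q k * q ^ k * hpoch
  rw [hvalue]
  refine ((hasSum_geometric_of_lt_one (mul_nonneg hb₀ (pow_nonneg hq₀ k)) hratio).mul_left
    ((1 - b) * (eulerCoeff q k * q ^ k))).congr_fun fun i => ?_
  ring

lemma summable_pow_mul_eulerCoeff_mul_pow {q b : ℝ} (hq₀ : 0 ≤ q) (hq₁ : q < 1) (hb : |b| < 1) :
    Summable fun p : ℕ × ℕ => b ^ p.2 * (eulerCoeff q p.1 * (q ^ (p.2 + 1)) ^ p.1) := by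
  have heuler : Summable fun k => ‖eulerCoeff q k‖ := by
    simpa only [one_pow, mul_one] using (summable_eulerCoeff_mul_pow hq₀ hq₁ 1).norm
  have hgeom : Summable fun i => ‖b ^ i‖ := (summable_geometric_of_abs_lt_one hb).norm
  refine Summable.of_norm_bounded (heuler.mul_of_nonneg hgeom (fun _ => norm_nonneg _)
    fun _ => norm_nonneg _) fun p => ?_
  have hpow : ‖(q ^ (p.2 + 1)) ^ p.1‖ ≤ 1 := by
    rw [Real.norm_of_nonneg (by positivity)]
    exact pow_le_one₀ (pow_nonneg hq₀ _) (pow_le_one₀ hq₀ hq₁.le)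
  rw [norm_mul, norm_mul, mul_comm]
  exact mul_le_mul_of_nonneg_right (mul_le_of_le_one_right (norm_nonneg _) hpow) (norm_nonneg _)

-- Expanding `1 / (1 - b q ^ k)` geometrically turns the sum into `(1 - b) ∑ᵢ b ^ i (q^{i+1};q)_∞`.
lemma tsum_qHankelDual_mul_qHankel_zero_pos {q b : ℝ} (hq₀ : 0 ≤ q) (hq₁ : q < 1) (hb₀ : 0 ≤ b)
    (hb₁ : b < 1) : 0 < ∑' k, qHankelDual q b k * qHankel q b 0 k := by
  have hsum := summable_pow_mul_eulerCoeff_mul_pow hq₀ hq₁ ((abs_of_nonneg hb₀).trans_lt hb₁)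
  have hrow : ∀ i, ∑' k, b ^ i * (eulerCoeff q k * (q ^ (i + 1)) ^ k)
      = b ^ i * qPochInf q (q ^ (i + 1)) := fun i =>
    ((hasSum_eulerCoeff hq₀ hq₁ (q ^ (i + 1))).mul_left (b ^ i)).tsum_eq
  have hpoch : ∀ i, 0 < qPochInf q (q ^ (i + 1)) := fun i =>
    qPochInf_pos hq₀ hq₁ (pow_lt_one₀ hq₀ hq₁ i.succ_ne_zero)
  have hrows : Summable fun i => b ^ i * qPochInf q (q ^ (i + 1)) := by
    simpa only [Prod.fst_swap, Prod.snd_swap, hrow] using hsum.prod_symm.prod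
  have hswap : ∑' k, qHankelDual q b k * qHankel q b 0 k
      = (1 - b) * ∑' i, b ^ i * qPochInf q (q ^ (i + 1)) := by
    simp_rw [← (hasSum_qHankelDual_mul_qHankel_zero hq₀ hq₁ hb₀ hb₁ _).tsum_eq, tsum_mul_left]
    rw [← Summable.tsum_comm hsum]
    exact congrArg _ (tsum_congr hrow)
  rw [hswap]
  refine mul_pos (sub_pos.2 hb₁) (hrows.tsum_pos (fun i => ?_) 0 ?_)
  · exact mul_nonneg (pow_nonneg hb₀ i) (hpoch i).le
  · simpa only [pow_zero, one_mul] using hpoch 0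

lemma abs_qHankelDual_le {q b : ℝ} (hq₀ : 0 ≤ q) (hq₁ : q < 1) (hb₀ : 0 ≤ b) (hb₁ : b < 1)
    (k : ℕ) :
    |qHankelDual q b k|
      ≤ (qPochInf q q)⁻¹ * (qPochInf q (b * q))⁻¹ * q ^ (k + 1).choose 2 := by
  have hbq₀ : 0 ≤ b * q := mul_nonneg hb₀ hq₀
  have hbq₁ : b * q < 1 := by simpa only [pow_one] using mul_pow_lt_one hq₀ hq₁.le hb₁ 1
  have hinv : (qPoch q (b * q) k)⁻¹ ≤ (qPochInf q (b * q))⁻¹ :=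
    inv_anti₀ (qPochInf_pos hq₀ hq₁ hbq₁) (qPochInf_le_qPoch hq₀ hq₁ hbq₀ hbq₁ k)
  have hpoch := qPoch_pos hq₀ hq₁.le hbq₁ k
  rw [qHankelDual, abs_div, abs_mul, abs_of_pos hpoch, abs_of_nonneg (pow_nonneg hq₀ k),
    div_eq_mul_inv]
  calc |eulerCoeff q k| * q ^ k * (qPoch q (b * q) k)⁻¹
      ≤ (qPochInf q q)⁻¹ * q ^ k.choose 2 * q ^ k * (qPochInf q (b * q))⁻¹ := by
        have heuler := abs_eulerCoeff_le hq₀ hq₁ k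
        have := qPochInf_pos hq₀ hq₁ hq₁
        gcongr
    _ = (qPochInf q q)⁻¹ * (qPochInf q (b * q))⁻¹ * q ^ (k + 1).choose 2 := by
        rw [Nat.choose_succ_succ' k 1, Nat.choose_one_right]; ring

lemma abs_qHankel_le {q b : ℝ} (hq₀ : 0 ≤ q) (hq₁ : q ≤ 1) (hb₀ : 0 ≤ b) (hb₁ : b < 1)
    (n k : ℕ) : |qHankel q b n k| ≤ (q ^ (n * k))⁻¹ := by
  have hinv : 0 ≤ (q ^ (n * k))⁻¹ := inv_nonneg.2 (pow_nonneg hq₀ _)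
  rw [qHankel, abs_mul, abs_of_nonneg hinv, abs_of_pos (qPoch_pos hq₀ hq₁ hb₁ _)]
  exact mul_le_of_le_one_right hinv (qPoch_le_one hq₀ hq₁ hb₀ hb₁ _)

lemma summable_mul_qHankel {q b ρ D : ℝ} (hq₀ : 0 ≤ q) (hq₁ : q < 1) (hb₀ : 0 ≤ b) (hb₁ : b < 1)
    {d : ℕ → ℝ} (hd : ∀ n, |d n| ≤ D * ρ ^ n * q ^ n.choose 2) (k : ℕ) :
    Summable fun n => d n * qHankel q b n k := by
  have hq : |q| < 1 := (abs_of_nonneg hq₀).trans_lt hq₁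
  refine Summable.of_norm_bounded
    ((summable_pow_choose_two_mul_pow hq (ρ * (q ^ k)⁻¹)).mul_left D) fun n => ?_
  calc ‖d n * qHankel q b n k‖ ≤ D * ρ ^ n * q ^ n.choose 2 * (q ^ (n * k))⁻¹ := by
        rw [norm_mul]
        exact mul_le_mul (hd n) (abs_qHankel_le hq₀ hq₁.le hb₀ hb₁ n k) (abs_nonneg _)
          ((abs_nonneg _).trans (hd n))
    _ = D * (q ^ n.choose 2 * (ρ * (q ^ k)⁻¹) ^ n) := by
        rw [mul_pow, inv_pow, ← pow_mul, mul_comm k n]; ring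

lemma choose_two_add_choose_succ_two_left (m n : ℕ) :
    (n + m).choose 2 + (n + 1).choose 2 = (n + m) * n + m.choose 2 := by
  rw [← Nat.cast_inj (R := ℚ)]
  push_cast [Nat.cast_choose_two]
  ring

lemma choose_two_add_choose_succ_two_right (m n : ℕ) :
    n.choose 2 + (n + m + 1).choose 2 = n * (n + m) + (m + 1).choose 2 := by
  rw [← Nat.cast_inj (R := ℚ)]
  push_cast [Nat.cast_choose_two]
  ring

lemma exists_pow_mul_pow_choose_two_le {q r : ℝ} (hq₀ : 0 ≤ q) (hq₁ : q < 1) (hr₀ : 0 < r)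
    (hr₁ : r ≤ 1) :
    ∃ K : ℝ, ∀ n k : ℕ,
      r ^ n * q ^ (n.choose 2 + (k + 1).choose 2) ≤ K * r ^ k * q ^ (n * k) := by
  have hq : |q| < 1 := (abs_of_nonneg hq₀).trans_lt hq₁
  obtain ⟨B, hB⟩ := (summable_pow_choose_two_mul_pow hq r⁻¹).tendsto_atTop_zero.bddAbove_range
  replace hB : ∀ m : ℕ, q ^ m.choose 2 * r⁻¹ ^ m ≤ B := fun m => hB ⟨m, rfl⟩
  have hB₁ : 1 ≤ B := by simpa using hB 0
  refine ⟨B, fun n k => ?_⟩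
  rcases le_total k n with hkn | hnk
  · obtain ⟨m, rfl⟩ := Nat.exists_eq_add_of_le hkn
    have hr : r ^ (k + m) ≤ B * r ^ k :=
      (pow_le_pow_of_le_one hr₀.le hr₁ (Nat.le_add_right k m)).trans
        (le_mul_of_one_le_left (by positivity) hB₁)
    rw [choose_two_add_choose_succ_two_left, pow_add q]
    exact mul_le_mul hr (mul_le_of_le_one_right (by positivity) (pow_le_one₀ hq₀ hq₁.le))
      (by positivity) (by positivity)
  · obtain ⟨m, rfl⟩ := Nat.exists_eq_add_of_le hnk
    have hm : q ^ (m + 1).choose 2 ≤ B * r ^ m := by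
      have h := (hB m).trans' (mul_le_mul_of_nonneg_right (pow_le_pow_of_le_one hq₀ hq₁.le
        (Nat.choose_le_choose 2 m.le_succ)) (by positivity))
      rwa [inv_pow, ← div_eq_mul_inv, div_le_iff₀ (by positivity)] at h
    rw [choose_two_add_choose_succ_two_right, pow_add q, pow_add r]
    calc r ^ n * (q ^ (n * (n + m)) * q ^ (m + 1).choose 2)
        ≤ r ^ n * (q ^ (n * (n + m)) * (B * r ^ m)) := by gcongr
      _ = B * (r ^ n * r ^ m) * q ^ (n * (n + m)) := by ring

lemma summable_mul_qHankelDual_mul_qHankel {q b ρ D : ℝ} (hq₀ : 0 < q) (hq₁ : q < 1)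
    (hb₀ : 0 ≤ b) (hb₁ : b < 1) (hρ₀ : 0 ≤ ρ) (hρ₁ : ρ < 1) {d : ℕ → ℝ}
    (hd : ∀ n, |d n| ≤ D * ρ ^ n * q ^ n.choose 2) :
    Summable fun p : ℕ × ℕ => d p.1 * (qHankelDual q b p.2 * qHankel q b p.1 p.2) := by
  have hD : 0 ≤ D := by simpa using (abs_nonneg _).trans (hd 0)
  have hbq : b * q < 1 := by simpa only [pow_one] using mul_pow_lt_one hq₀.le hq₁.le hb₁ 1
  obtain ⟨r, hρr, hr₁⟩ := exists_between hρ₁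
  have hr₀ : 0 < r := hρ₀.trans_lt hρr
  obtain ⟨K, hK⟩ := exists_pow_mul_pow_choose_two_le hq₀.le hq₁ hr₀ hr₁.le
  set E := (qPochInf q q)⁻¹ * (qPochInf q (b * q))⁻¹
  have hE₀ : 0 ≤ E := mul_nonneg (inv_nonneg.2 (qPochInf_pos hq₀.le hq₁ hq₁).le)
    (inv_nonneg.2 (qPochInf_pos hq₀.le hq₁ hbq).le)
  have hgeom : Summable fun p : ℕ × ℕ => (ρ / r) ^ p.1 * r ^ p.2 :=
    (summable_geometric_of_lt_one (by positivity) ((div_lt_one hr₀).2 hρr)).mul_of_nonneg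
      (summable_geometric_of_lt_one hr₀.le hr₁) (fun _ => by positivity) fun _ => by positivity
  refine Summable.of_norm_bounded (hgeom.mul_left (D * E * K)) fun ⟨n, k⟩ => ?_
  calc ‖d n * (qHankelDual q b k * qHankel q b n k)‖
      ≤ D * ρ ^ n * q ^ n.choose 2 * (E * q ^ (k + 1).choose 2 * (q ^ (n * k))⁻¹) := by
        rw [norm_mul, norm_mul]
        exact mul_le_mul (hd n) (mul_le_mul (abs_qHankelDual_le hq₀.le hq₁ hb₀ hb₁ k)
          (abs_qHankel_le hq₀.le hq₁.le hb₀ hb₁ n k) (abs_nonneg _) (by positivity))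
          (by positivity) (by positivity)
    _ = D * E * (ρ / r) ^ n * (r ^ n * q ^ (n.choose 2 + (k + 1).choose 2))
          * (q ^ (n * k))⁻¹ := by
        rw [div_pow, pow_add]; field_simp
    _ ≤ D * E * (ρ / r) ^ n * (K * r ^ k * q ^ (n * k)) * (q ^ (n * k))⁻¹ := by
        exact mul_le_mul_of_nonneg_right (mul_le_mul_of_nonneg_left (hK n k) (by positivity))
          (by positivity)
    _ = D * E * K * ((ρ / r) ^ n * r ^ k) := by field_simp

lemma apply_zero_eq_zero_of_tsum_mul_qHankel_eq_zero {q b ρ D : ℝ} (hq₀ : 0 < q) (hq₁ : q < 1)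
    (hb₀ : 0 ≤ b) (hb₁ : b < 1) (hρ₀ : 0 ≤ ρ) (hρ₁ : ρ < 1) {d : ℕ → ℝ}
    (hd : ∀ n, |d n| ≤ D * ρ ^ n * q ^ n.choose 2)
    (hrow : ∀ k, ∑' n, d n * qHankel q b n k = 0) : d 0 = 0 := by
  have hzero : ∑' n, ∑' k, d n * (qHankelDual q b k * qHankel q b n k) = 0 := by
    rw [← Summable.tsum_comm (f := fun n k => d n * (qHankelDual q b k * qHankel q b n k))
      (summable_mul_qHankelDual_mul_qHankel hq₀ hq₁ hb₀ hb₁ hρ₀ hρ₁ hd)]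
    simp only [mul_left_comm (d _), tsum_mul_left, hrow, mul_zero, tsum_zero]
  have hcolumn : ∀ n ≠ 0, ∑' k, d n * (qHankelDual q b k * qHankel q b n k) = 0 := by
    intro n hn
    obtain ⟨n, rfl⟩ := Nat.exists_eq_succ_of_ne_zero hn
    rw [tsum_mul_left, (hasSum_qHankelDual_mul_qHankel_succ hq₀ hq₁ hb₁ n).tsum_eq, mul_zero]
  rw [tsum_eq_single 0 hcolumn, tsum_mul_left] at hzero
  exact (mul_eq_zero.1 hzero).resolve_right
    (tsum_qHankelDual_mul_qHankel_zero_pos hq₀.le hq₁ hb₀ hb₁).ne'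

theorem eq_zero_of_tsum_mul_qHankel_eq_zero {q b ρ D : ℝ} (hq₀ : 0 < q) (hq₁ : q < 1)
    (hb₀ : 0 ≤ b) (hb₁ : b < 1) (hρ₀ : 0 ≤ ρ) (hρ₁ : ρ < 1) {d : ℕ → ℝ}
    (hd : ∀ n, |d n| ≤ D * ρ ^ n * q ^ n.choose 2)
    (hrow : ∀ k, ∑' n, d n * qHankel q b n k = 0) (n : ℕ) : d n = 0 := by
  have hhead : d 0 = 0 :=
    apply_zero_eq_zero_of_tsum_mul_qHankel_eq_zero hq₀ hq₁ hb₀ hb₁ hρ₀ hρ₁ hd hrow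
  induction n generalizing b d with
  | zero => exact hhead
  | succ _ ih =>
    have hD : 0 ≤ D := by simpa using (abs_nonneg _).trans (hd 0)
    have hd' : ∀ i, |d (i + 1)| ≤ D * ρ ^ i * q ^ i.choose 2 := fun i =>
      (hd (i + 1)).trans (mul_le_mul
        (mul_le_mul_of_nonneg_left (pow_le_pow_of_le_one hρ₀ hρ₁.le i.le_succ) hD)
        (pow_le_pow_of_le_one hq₀.le hq₁.le (Nat.choose_le_choose 2 i.le_succ))
        (by positivity) (by positivity))
    have hbq : b * q < 1 := by simpa only [pow_one] using mul_pow_lt_one hq₀.le hq₁.le hb₁ 1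
    have hrow' : ∀ k, ∑' i, d (i + 1) * qHankel q (b * q) i k = 0 := by
      intro k
      have h := hrow k
      rw [(summable_mul_qHankel hq₀.le hq₁ hb₀ hb₁ hd k).tsum_eq_zero_add, hhead, zero_mul,
        zero_add] at h
      simp only [qHankel_succ, mul_left_comm (d _), tsum_mul_left] at h
      exact (mul_eq_zero.1 h).resolve_left
        (mul_ne_zero (inv_ne_zero (pow_ne_zero k hq₀.ne')) (sub_pos.2 hb₁).ne')
    have hbq₀ : 0 ≤ b * q := mul_nonneg hb₀ hq₀.le
    exact ih hbq₀ hbq hd' hrow'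
      (apply_zero_eq_zero_of_tsum_mul_qHankel_eq_zero hq₀ hq₁ hbq₀ hbq hρ₀ hρ₁ hd' hrow')

/-! ### Moments of the `q`-Gaussian -/

lemma qGauss_pos {q : ℝ} (hq₀ : 0 ≤ q) (hq₁ : q < 1) (x : ℝ) : 0 < qGauss q x :=
  one_div_pos.2 (qPochInf_pos (sq_nonneg q) (pow_lt_one₀ hq₀ hq₁ two_ne_zero)
    (by linarith [sq_nonneg x]))

lemma qGauss_neg (q x : ℝ) : qGauss q (-x) = qGauss q x := by
  rw [qGauss, qGauss, neg_sq]

lemma qGauss_mul {q : ℝ} (hq : |q| < 1) (x : ℝ) :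
    qGauss q (q * x) = (1 + x ^ 2) * qGauss q x := by
  have hq2 : |q ^ 2| < 1 := by
    rw [abs_pow]
    exact pow_lt_one₀ (abs_nonneg q) hq two_ne_zero
  have hx : 1 + x ^ 2 ≠ 0 := by positivity
  rw [qGauss, qGauss, qPochInf_eq_one_sub_mul hq2 (-(x ^ 2)), sub_neg_eq_add, ← mul_div_assoc,
    mul_one, div_mul_cancel_left₀ hx, one_div, mul_pow, neg_mul, mul_comm (q ^ 2)]

lemma pow_mul_qGauss_le {q : ℝ} (hq₀ : 0 < q) (hq₁ : q < 1) (p : ℕ) (x : ℝ) :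
    x ^ (2 * p) * qGauss q x ≤ ((q ^ 2) ^ p.choose 2)⁻¹ := by
  have hx : -(x ^ 2) ≤ 0 := neg_nonpos.2 (sq_nonneg x)
  have hq2 : q ^ 2 < 1 := pow_lt_one₀ hq₀.le hq₁ two_ne_zero
  have hbound := (neg_pow_mul_pow_choose_two_le_qPoch (sq_nonneg q) hx p).trans
    (qPoch_le_qPochInf (sq_nonneg q) hq2 hx p)
  rw [neg_neg, ← pow_mul] at hbound
  rw [qGauss, mul_one_div, div_le_iff₀ (qPochInf_pos (sq_nonneg q) hq2 (hx.trans_lt one_pos)),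
    le_inv_mul_iff₀ (by positivity), mul_comm]
  exact hbound

/-- The `r`-th moment of the `q`-Gaussian over the positive half `{q ^ i * γ}` of the lattice
`L(γ)`, without the factor `1 - q` of the `q`-integral. -/
def latticeMoment (q γ : ℝ) (r : ℕ) : ℝ :=
  ∑' i : ℤ, (q ^ i * γ) ^ (r + 1) * qGauss q (q ^ i * γ)

lemma summable_mul_pow_succ {q : ℝ} (hq₀ : 0 ≤ q) (hq₁ : q < 1) (γ : ℝ) (r : ℕ) :
    Summable fun n : ℕ => (q ^ n * γ) ^ (r + 1) := by
  simp only [mul_pow, ← pow_mul, mul_comm _ (r + 1)]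
  simp only [pow_mul]
  exact (summable_geometric_of_lt_one (by positivity)
    (pow_lt_one₀ hq₀ hq₁ r.succ_ne_zero)).mul_right _

lemma latticeMoment_term_pos {q γ : ℝ} (hq₀ : 0 < q) (hq₁ : q < 1) (hγ : 0 < γ) (r : ℕ)
    (i : ℤ) : 0 < (q ^ i * γ) ^ (r + 1) * qGauss q (q ^ i * γ) :=
  mul_pos (by positivity) (qGauss_pos hq₀.le hq₁ _)

lemma summable_latticeMoment {q γ : ℝ} (hq₀ : 0 < q) (hq₁ : q < 1) (hγ : 0 < γ) (r : ℕ) :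
    Summable fun i : ℤ => (q ^ i * γ) ^ (r + 1) * qGauss q (q ^ i * γ) := by
  have hpos := latticeMoment_term_pos hq₀ hq₁ hγ r
  refine Summable.of_nat_of_neg ?_ ?_
  · refine Summable.of_nonneg_of_le (fun n => (hpos n).le) (fun n => ?_)
      (summable_mul_pow_succ hq₀.le hq₁ γ r)
    rw [zpow_natCast]
    exact mul_le_of_le_one_right (by positivity) (by simpa using pow_mul_qGauss_le hq₀ hq₁ 0 _)
  · refine Summable.of_nonneg_of_le (fun n => (hpos (-n)).le) (fun n => ?_)
      ((summable_mul_pow_succ hq₀.le hq₁ γ⁻¹ r).mul_left ((q ^ 2) ^ (r + 1).choose 2)⁻¹)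
    have hinv : q ^ n * γ⁻¹ = (q ^ (-(n : ℤ)) * γ)⁻¹ := by
      rw [mul_inv, zpow_neg, inv_inv, zpow_natCast]
    rw [hinv, inv_pow, ← div_eq_mul_inv, le_div_iff₀ (by positivity)]
    rw [mul_right_comm, ← pow_add, ← two_mul]
    exact pow_mul_qGauss_le hq₀ hq₁ (r + 1) _

lemma latticeMoment_pos {q γ : ℝ} (hq₀ : 0 < q) (hq₁ : q < 1) (hγ : 0 < γ) (r : ℕ) :
    0 < latticeMoment q γ r :=
  (summable_latticeMoment hq₀ hq₁ hγ r).tsum_pos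
    (fun i => (latticeMoment_term_pos hq₀ hq₁ hγ r i).le) 0
    (latticeMoment_term_pos hq₀ hq₁ hγ r 0)

lemma pow_mul_latticeMoment_add_two {q γ : ℝ} (hq₀ : 0 < q) (hq₁ : q < 1) (hγ : 0 < γ) (r : ℕ) :
    q ^ (r + 1) * latticeMoment q γ (r + 2) = (1 - q ^ (r + 1)) * latticeMoment q γ r := by
  have hshift : latticeMoment q γ r
      = q ^ (r + 1) * (latticeMoment q γ r + latticeMoment q γ (r + 2)) := by
    calc latticeMoment q γ r
        = ∑' i : ℤ, (q ^ (i + 1) * γ) ^ (r + 1) * qGauss q (q ^ (i + 1) * γ) :=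
          ((Equiv.addRight (1 : ℤ)).tsum_eq
            fun i : ℤ => (q ^ i * γ) ^ (r + 1) * qGauss q (q ^ i * γ)).symm
      _ = ∑' i : ℤ, q ^ (r + 1) * ((q ^ i * γ) ^ (r + 1) * qGauss q (q ^ i * γ)
            + (q ^ i * γ) ^ (r + 2 + 1) * qGauss q (q ^ i * γ)) := by
          refine tsum_congr fun i => ?_
          have hstep : q ^ (i + 1) * γ = q * (q ^ i * γ) := by
            rw [zpow_add_one₀ hq₀.ne']; ring
          rw [hstep, qGauss_mul ((abs_of_pos hq₀).trans_lt hq₁)]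
          ring
      _ = q ^ (r + 1) * (latticeMoment q γ r + latticeMoment q γ (r + 2)) := by
          rw [tsum_mul_left, (summable_latticeMoment hq₀ hq₁ hγ r).tsum_add
            (summable_latticeMoment hq₀ hq₁ hγ (r + 2))]
          rfl
  linarith

lemma latticeMoment_add_two_mul {q γ : ℝ} (hq₀ : 0 < q) (hq₁ : q < 1) (hγ : 0 < γ) (r j : ℕ) :
    latticeMoment q γ (r + 2 * j)
      = latticeMoment q γ r * ((q ^ (j ^ 2 + j * r))⁻¹ * qPoch (q ^ 2) (q ^ (r + 1)) j) := by
  induction j with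
  | zero => simp [qPoch_zero]
  | succ j ih =>
    have hpow : q ^ (r + 2 * j + 1) ≠ 0 := pow_ne_zero _ hq₀.ne'
    refine mul_left_cancel₀ hpow ?_
    have hexp : q ^ ((j + 1) ^ 2 + (j + 1) * r) = q ^ (r + 2 * j + 1) * q ^ (j ^ 2 + j * r) := by
      ring
    have hbase : q ^ (r + 1) * (q ^ 2) ^ j = q ^ (r + 2 * j + 1) := by ring
    rw [mul_add_one, ← add_assoc, pow_mul_latticeMoment_add_two hq₀ hq₁ hγ, ih, qPoch_succ, hexp,
      hbase, mul_inv]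
    field_simp

/-! ### Moments of a power series times the `q`-Gaussian -/

lemma tsum_add_tsum_neg {a : ℕ → ℝ} (ha : ∀ x : ℝ, Summable fun n => a n * x ^ n) (x : ℝ)
    {ε : ℕ} (hε : ε < 2) :
    (∑' n, a n * x ^ n) + (-1) ^ ε * ∑' n, a n * (-x) ^ n
      = 2 * ∑' n, a (2 * n + ε) * x ^ (2 * n + ε) := by
  have hinj : Function.Injective fun n : ℕ => 2 * n + ε := fun m n h => by
    simp only at h; omega
  have hterm : ∀ n, a n * x ^ n + (-1) ^ ε * (a n * (-x) ^ n)
      = (1 + (-1) ^ (n + ε)) * (a n * x ^ n) := fun n => by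
    rw [neg_pow x n, pow_add]; ring
  have hsupport : (Function.support fun n => (1 + (-1) ^ (n + ε)) * (a n * x ^ n))
      ⊆ Set.range fun n => 2 * n + ε := by
    intro n hn
    have heven : Even (n + ε) := by
      by_contra hodd
      exact hn (by simp only [(Nat.not_even_iff_odd.1 hodd).neg_one_pow, add_neg_cancel, zero_mul])
    obtain ⟨m, hm⟩ := heven
    exact ⟨m - ε, by simp only; omega⟩
  rw [← tsum_mul_left, ← (ha x).tsum_add ((ha (-x)).mul_left _), tsum_congr hterm,
    ← hinj.tsum_eq hsupport, ← tsum_mul_left]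
  refine tsum_congr fun n => ?_
  rw [add_assoc, ← two_mul, ← mul_add, Even.neg_one_pow (even_two_mul _), one_add_one_eq_two]

lemma tsum_tsum_mul_pow_mul_qGauss {q γ : ℝ} (hq₀ : 0 < q) (hq₁ : q < 1) (hγ : 0 < γ)
    {c : ℕ → ℝ} {e : ℕ → ℕ} (hc : Summable fun n => c n * latticeMoment q γ (e n)) :
    ∑' i : ℤ, ∑' n, c n * ((q ^ i * γ) ^ (e n + 1) * qGauss q (q ^ i * γ))
      = ∑' n, c n * latticeMoment q γ (e n) := by
  have hsum : Summable fun p : ℕ × ℤ =>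
      c p.1 * ((q ^ p.2 * γ) ^ (e p.1 + 1) * qGauss q (q ^ p.2 * γ)) := by
    refine Summable.of_abs ((summable_prod_of_nonneg fun p => abs_nonneg _).2 ⟨fun n => ?_, ?_⟩)
    · exact ((summable_latticeMoment hq₀ hq₁ hγ (e n)).mul_left (c n)).abs
    · refine hc.abs.congr fun n => ?_
      simp only [abs_mul (c n), abs_of_pos (latticeMoment_pos hq₀ hq₁ hγ _),
        abs_of_pos (latticeMoment_term_pos hq₀ hq₁ hγ _ _), tsum_mul_left]
      rfl
  rw [Summable.tsum_comm hsum]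
  exact tsum_congr fun n => tsum_mul_left

lemma qInt_tsum_mul_qGauss_mul_pow {q γ : ℝ} (hq₀ : 0 < q) (hq₁ : q < 1) (hγ : 0 < γ)
    {a : ℕ → ℝ} (ha : ∀ x : ℝ, Summable fun n => a n * x ^ n) {ε : ℕ} (hε : ε < 2) (k : ℕ)
    (hsum : Summable fun n => a (2 * n + ε) * latticeMoment q γ (2 * ε + 2 * (n + k))) :
    qInt q γ (fun x => (∑' n, a n * x ^ n) * qGauss q x * x ^ (2 * k + ε))
      = 2 * (1 - q) * ∑' n, a (2 * n + ε) * latticeMoment q γ (2 * ε + 2 * (n + k)) := by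
  have hterm : ∀ x : ℝ,
      x * ((∑' n, a n * x ^ n) * qGauss q x * x ^ (2 * k + ε)
        + (∑' n, a n * (-x) ^ n) * qGauss q (-x) * (-x) ^ (2 * k + ε))
      = 2 * ∑' n, a (2 * n + ε) * (x ^ (2 * ε + 2 * (n + k) + 1) * qGauss q x) := by
    intro x
    have hneg : (-x) ^ (2 * k + ε) = (-1) ^ ε * x ^ (2 * k + ε) := by
      rw [neg_pow, pow_add, Even.neg_one_pow (even_two_mul k), one_mul]
    calc _ = ((∑' n, a n * x ^ n) + (-1) ^ ε * ∑' n, a n * (-x) ^ n)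
            * (x ^ (2 * k + ε + 1) * qGauss q x) := by rw [qGauss_neg, hneg]; ring
      _ = 2 * ∑' n, a (2 * n + ε) * x ^ (2 * n + ε)
            * (x ^ (2 * k + ε + 1) * qGauss q x) := by
          rw [tsum_add_tsum_neg ha x hε, mul_assoc, tsum_mul_right]
      _ = _ := by
          congr 1
          exact tsum_congr fun n => by ring
  simp only [qInt, hterm, tsum_mul_left, tsum_tsum_mul_pow_mul_qGauss hq₀ hq₁ hγ hsum]
  ring

lemma qInt_neg (q γ : ℝ) (f : ℝ → ℝ) : qInt q (-γ) f = -qInt q γ f := by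
  simp only [qInt, mul_neg, neg_neg, neg_mul, tsum_neg, add_comm (f (-_))]

lemma rpow_sq_div_two {q : ℝ} (hq : 0 < q) (n : ℕ) :
    q ^ ((n : ℝ) ^ 2 / 2) = √q ^ n * q ^ n.choose 2 := by
  rw [Real.sqrt_eq_rpow, ← Real.rpow_natCast (q ^ (1 / 2 : ℝ)), ← Real.rpow_mul hq.le,
    ← Real.rpow_natCast q, ← Real.rpow_add hq, Nat.cast_choose_two]
  ring_nf

lemma choose_two_two_mul_add (n ε : ℕ) :
    (2 * n + ε).choose 2 = n ^ 2 + n * (2 * ε) + 2 * n.choose 2 + ε.choose 2 := by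
  rw [← Nat.cast_inj (R := ℚ)]
  push_cast [Nat.cast_choose_two]
  ring

lemma mul_latticeMoment_eq {q γ : ℝ} (hq₀ : 0 < q) (hq₁ : q < 1) (hγ : 0 < γ) (c : ℝ)
    (r n k : ℕ) :
    c * latticeMoment q γ (r + 2 * (n + k))
      = latticeMoment q γ r * (q ^ (k ^ 2 + k * r))⁻¹
        * (c * (q ^ (n ^ 2 + n * r))⁻¹ * qHankel (q ^ 2) (q ^ (r + 1)) n k) := by
  have hexp : q ^ ((n + k) ^ 2 + (n + k) * r)
      = q ^ (k ^ 2 + k * r) * q ^ (n ^ 2 + n * r) * (q ^ 2) ^ (n * k) := by ring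
  rw [latticeMoment_add_two_mul hq₀ hq₁ hγ, hexp, qHankel, mul_inv, mul_inv]
  ring

section MomentDeterminacy

variable {q γ r C : ℝ} {a : ℕ → ℝ}

lemma summable_mul_pow_of_abs_le (hq : |q| < 1) (ha : ∀ n, |a n| ≤ C * r ^ n * q ^ n.choose 2)
    (x : ℝ) : Summable fun n => a n * x ^ n := by
  refine Summable.of_norm_bounded
    ((summable_pow_choose_two_mul_pow hq (r * |x|)).mul_left C) fun n => ?_
  calc ‖a n * x ^ n‖ ≤ C * r ^ n * q ^ n.choose 2 * |x| ^ n := by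
        rw [norm_mul, norm_pow, Real.norm_eq_abs, Real.norm_eq_abs]
        exact mul_le_mul_of_nonneg_right (ha n) (by positivity)
    _ = C * (q ^ n.choose 2 * (r * |x|) ^ n) := by rw [mul_pow]; ring

lemma abs_coeff_mul_inv_pow_le (hq : 0 < q) (ha : ∀ n, |a n| ≤ C * r ^ n * q ^ n.choose 2)
    (ε n : ℕ) :
    |a (2 * n + ε) * (q ^ (n ^ 2 + n * (2 * ε)))⁻¹|
      ≤ C * r ^ ε * q ^ ε.choose 2 * (r ^ 2) ^ n * (q ^ 2) ^ n.choose 2 := by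
  have hpow : 0 < q ^ (n ^ 2 + n * (2 * ε)) := pow_pos hq _
  rw [abs_mul, abs_of_pos (inv_pos.2 hpow), ← div_eq_mul_inv, div_le_iff₀ hpow]
  refine (ha (2 * n + ε)).trans_eq ?_
  rw [choose_two_two_mul_add]
  ring

lemma coeff_eq_zero_of_qInt_eq_zero (hq₀ : 0 < q) (hq₁ : q < 1) (hγ : 0 < γ) (hr : r ^ 2 < 1)
    (ha : ∀ n, |a n| ≤ C * r ^ n * q ^ n.choose 2)
    (hmom : ∀ k, qInt q γ (fun x => (∑' n, a n * x ^ n) * qGauss q x * x ^ k) = 0)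
    {ε : ℕ} (hε : ε < 2) (n : ℕ) : a (2 * n + ε) = 0 := by
  set d : ℕ → ℝ := fun n => a (2 * n + ε) * (q ^ (n ^ 2 + n * (2 * ε)))⁻¹
  set b : ℝ := q ^ (2 * ε + 1)
  have hQ₀ : 0 < q ^ 2 := pow_pos hq₀ 2
  have hQ₁ : q ^ 2 < 1 := pow_lt_one₀ hq₀.le hq₁ two_ne_zero
  have hb₀ : 0 ≤ b := pow_nonneg hq₀.le _
  have hb₁ : b < 1 := pow_lt_one₀ hq₀.le hq₁ (Nat.succ_ne_zero _)
  have hd : ∀ n, |d n| ≤ C * r ^ ε * q ^ ε.choose 2 * (r ^ 2) ^ n * (q ^ 2) ^ n.choose 2 :=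
    abs_coeff_mul_inv_pow_le hq₀ ha ε
  have hmoment : ∀ k n, a (2 * n + ε) * latticeMoment q γ (2 * ε + 2 * (n + k))
      = latticeMoment q γ (2 * ε) * (q ^ (k ^ 2 + k * (2 * ε)))⁻¹
        * (d n * qHankel (q ^ 2) b n k) := fun k n =>
    mul_latticeMoment_eq hq₀ hq₁ hγ (a (2 * n + ε)) (2 * ε) n k
  have hrow : ∀ k, ∑' n, d n * qHankel (q ^ 2) b n k = 0 := by
    intro k
    have hsum : Summable fun n => a (2 * n + ε) * latticeMoment q γ (2 * ε + 2 * (n + k)) := by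
      simpa only [hmoment k] using (summable_mul_qHankel hQ₀.le hQ₁ hb₀ hb₁ hd k).mul_left _
    have h := hmom (2 * k + ε)
    rw [qInt_tsum_mul_qGauss_mul_pow hq₀ hq₁ hγ
      (summable_mul_pow_of_abs_le ((abs_of_pos hq₀).trans_lt hq₁) ha) hε k hsum] at h
    simp only [hmoment k, tsum_mul_left] at h
    have hM := (latticeMoment_pos hq₀ hq₁ hγ (2 * ε)).ne'
    have hq' : 1 - q ≠ 0 := (sub_pos.2 hq₁).ne'
    simpa [hM, hq', hq₀.ne'] using h
  have hdn : d n = 0 :=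
    eq_zero_of_tsum_mul_qHankel_eq_zero hQ₀ hQ₁ hb₀ hb₁ (sq_nonneg r) hr hd hrow n
  exact (mul_eq_zero.1 hdn).resolve_right (inv_ne_zero (pow_pos hq₀ _).ne')

end MomentDeterminacy

theorem stmt8_general {q γ s C : ℝ} (hq : q ∈ Set.Ioo (0 : ℝ) 1) (hγ : γ ≠ 0)
    (hs : s ^ 2 * q < 1) {a : ℕ → ℝ}
    (ha : ∀ n : ℕ, |a n| ≤ C * s ^ n * q ^ (((n : ℝ) ^ 2) / 2))
    (hmom : ∀ k : ℕ, qInt q γ (fun x => (∑' n, a n * x ^ n) * qGauss q x * x ^ k) = 0) (n : ℕ) :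
    a n = 0 := by
  obtain ⟨hq₀, hq₁⟩ := hq
  have hr : (s * √q) ^ 2 < 1 := by rwa [mul_pow, Real.sq_sqrt hq₀.le]
  have hdecay : ∀ n, |a n| ≤ C * (s * √q) ^ n * q ^ n.choose 2 := fun n => by
    simpa only [rpow_sq_div_two hq₀, mul_pow, mul_assoc] using ha n
  have hmom_abs : ∀ k, qInt q |γ| (fun x => (∑' n, a n * x ^ n) * qGauss q x * x ^ k) = 0 := by
    rcases abs_choice γ with h | h <;> simpa only [h, qInt_neg, neg_eq_zero] using hmom
  have h := coeff_eq_zero_of_qInt_eq_zero hq₀ hq₁ (abs_pos.2 hγ) hr hdecay hmom_abs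
    (Nat.mod_lt n two_pos) (n / 2)
  rwa [Nat.div_add_mod] at h

/-- Moment-determinacy lemma, general case. -/
theorem stmt8 (q γ s : ℝ) (hq : q ∈ Set.Ioo (0 : ℝ) 1) (hγ : 0 < γ)
    (hs : s ∈ Set.Ioo (0 : ℝ) 1)
    (a : ℕ → ℝ) (C : ℝ) (hC : 0 < C)
    (ha : ∀ n : ℕ, |a n| ≤ C * s ^ n * q ^ (((n : ℝ) ^ 2) / 2))
    (F : ℝ → ℝ) (hF : ∀ x, F x = (∑' n : ℕ, a n * x ^ n) * qGauss q x)
    (hmom : ∀ k : ℕ, qInt q γ (fun x => F x * x ^ k) = 0) :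
    ∀ x, F x = 0 := by
  have hsq : s ^ 2 * q < 1 := mul_lt_one_of_nonneg_of_lt_one_left (sq_nonneg s)
    (pow_lt_one₀ hs.1.le hs.2 two_ne_zero) hq.2.le
  have hcoeff : ∀ n, a n = 0 :=
    stmt8_general hq hγ.ne' hsq ha (by simpa only [hF] using hmom)
  simp [hF, hcoeff]
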